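/- Suppose P_1 and P_2 are symmetric positive semidefinite n×n matrices, both solving the stochastic algebraic Riccati equation, and suppose their associated gains L(P_1) = −(R + Bᵀ P_1 B + Σ_{j=1}^q β̄_j B_jᵀ P_1 B_j)^{-1} Bᵀ P_1 A and L(P_2) (defined analogously) are both admissible. Then P_1 = P_2; i.e., the SARE has at most one positive semidefinite solution with admissible associated gain. -/

import Mathlib

open Matrix Filter Topology

/-- The sandwich map `X ↦ M * X * Mᵀ` as a linear endomorphism of `n × n` real matrices. -/
noncomputable def sandwich {n : ℕ} (M : Matrix (Fin n) (Fin n) ℝ) :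
    Module.End ℝ (Matrix (Fin n) (Fin n) ℝ) :=
  (LinearMap.mulLeft ℝ M).comp (LinearMap.mulRight ℝ Mᵀ)

/-- The closed-loop covariance operator
`𝒯_L(X) = (A+BL) X (A+BL)ᵀ + Σᵢ ᾱᵢ Aᵢ X Aᵢᵀ + Σⱼ β̄ⱼ (BⱼL) X (BⱼL)ᵀ`. -/
noncomputable def calT {n m p q : ℕ}
    (A : Matrix (Fin n) (Fin n) ℝ) (A' : Fin p → Matrix (Fin n) (Fin n) ℝ)
    (B : Matrix (Fin n) (Fin m) ℝ) (B' : Fin q → Matrix (Fin n) (Fin m) ℝ)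
    (al : Fin p → ℝ) (be : Fin q → ℝ) (L : Matrix (Fin m) (Fin n) ℝ) :
    Module.End ℝ (Matrix (Fin n) (Fin n) ℝ) :=
  sandwich (A + B * L) + ∑ i, al i • sandwich (A' i) + ∑ j, be j • sandwich (B' j * L)

/-- The (trace-)adjoint operator
`𝒯_L^*(P) = (A+BL)ᵀ P (A+BL) + Σᵢ ᾱᵢ Aᵢᵀ P Aᵢ + Σⱼ β̄ⱼ Lᵀ Bⱼᵀ P Bⱼ L`. -/
noncomputable def calTstar {n m p q : ℕ}
    (A : Matrix (Fin n) (Fin n) ℝ) (A' : Fin p → Matrix (Fin n) (Fin n) ℝ)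
    (B : Matrix (Fin n) (Fin m) ℝ) (B' : Fin q → Matrix (Fin n) (Fin m) ℝ)
    (al : Fin p → ℝ) (be : Fin q → ℝ) (L : Matrix (Fin m) (Fin n) ℝ) :
    Module.End ℝ (Matrix (Fin n) (Fin n) ℝ) :=
  sandwich (A + B * L)ᵀ + ∑ i, al i • sandwich (A' i)ᵀ + ∑ j, be j • sandwich (B' j * L)ᵀ

/-- A gain `L` is admissible if the spectral radius of `𝒯_L`, as a linear endomorphism of
the space of `n × n` real matrices, is strictly less than `1`. -/
noncomputable def Admissible {n m p q : ℕ}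
    (A : Matrix (Fin n) (Fin n) ℝ) (A' : Fin p → Matrix (Fin n) (Fin n) ℝ)
    (B : Matrix (Fin n) (Fin m) ℝ) (B' : Fin q → Matrix (Fin n) (Fin m) ℝ)
    (al : Fin p → ℝ) (be : Fin q → ℝ) (L : Matrix (Fin m) (Fin n) ℝ) : Prop :=
  spectralRadius ℝ (calT A A' B B' al be L) < 1

/-!
Write `S(P)` for the matrix inverted in the SARE. Completing the square gives, for every gain `L`,
`𝒯_L^*(P) + LᵀRL + Q = Ric(P) + (L - L(P))ᵀ S(P) (L - L(P))`,
where `Ric` is the right-hand side of the SARE. Taking `L = L(P₂)` and subtracting the identities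
for two solutions, `D = P₂ - P₁` satisfies the Lyapunov inequality `D - 𝒯_L^*(D) ≥ 0`. As `𝒯_L^*`
preserves a closed cone with nonempty interior and has spectral radius less than `1`, this forces
`D ≥ 0`; exchanging the solutions gives `P₁ = P₂`.

`Admissible` bounds only the real eigenvalues of `𝒯_L`. This is enough because the cone argument
follows `(1 - t 𝒯_L^*)⁻¹` along real `t ∈ [0, 1]` instead of summing a Neumann series.
-/

section ConePreserving

variable {E : Type*} [NormedAddCommGroup E] [NormedSpace ℝ E]

theorem add_mem_interior (C : ProperCone ℝ E) {x y : E} (hx : x ∈ interior (C : Set E))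
    (hy : y ∈ C) : x + y ∈ interior (C : Set E) :=
  interior_mono (Set.add_subset_iff.2 fun _ hu _ hv => add_mem hu hv)
    (subset_interior_add_left (Set.add_mem_add hx hy))

-- Along `y t = (1 - tT)⁻¹ b` the identity `y t = b + t T(y t)` turns membership in `C` into
-- membership in its interior, so the set of `t ∈ [0, 1]` with `y t ∈ C` is clopen.
theorem mem_interior_of_sub_map_mem_interior [CompleteSpace E] (C : ProperCone ℝ E) (T : E →L[ℝ] E)
    (hT : Set.MapsTo T C C) (hunit : ∀ t ∈ Set.Icc (0 : ℝ) 1, IsUnit (1 - t • T)) {x : E}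
    (hx : x - T x ∈ interior (C : Set E)) : x ∈ interior (C : Set E) := by
  set b := x - T x with hb
  let y : Set.Icc (0 : ℝ) 1 → E := fun t => Ring.inverse (1 - (t : ℝ) • T) b
  have hy_eq (t) : y t = b + (t : ℝ) • T (y t) := by
    have h := congrArg (· b) (Ring.mul_inverse_cancel _ (hunit t t.2))
    simpa [y, sub_eq_iff_eq_add] using h
  have hy_cont : Continuous y := continuous_iff_continuousAt.2 fun t => by
    obtain ⟨u, hu⟩ := hunit t t.2
    have hinv : ContinuousAt Ring.inverse (1 - (t : ℝ) • T) :=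
      hu ▸ NormedRing.inverse_continuousAt u
    have hlin : ContinuousAt (fun s : Set.Icc (0 : ℝ) 1 => 1 - (s : ℝ) • T) t := by fun_prop
    exact (hinv.comp_of_eq hlin rfl).clm_apply continuousAt_const
  have hy_interior (t) (ht : y t ∈ C) : y t ∈ interior (C : Set E) :=
    hy_eq t ▸ add_mem_interior C hx (C.smul_mem (hT ht) t.2.1)
  have hclopen : IsClopen (y ⁻¹' C) := by
    refine ⟨C.isClosed.preimage hy_cont, ?_⟩
    have : y ⁻¹' C = y ⁻¹' interior C :=
      Set.Subset.antisymm hy_interior (Set.preimage_mono interior_subset)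
    exact this ▸ isOpen_interior.preimage hy_cont
  have hzero : (0 : Set.Icc (0 : ℝ) 1) ∈ y ⁻¹' C := by
    simpa [y] using interior_subset hx
  have hone : y 1 ∈ C := (hclopen.eq_univ ⟨0, hzero⟩).ge (Set.mem_univ 1)
  have hy_one : y 1 = x := by
    have h := congrArg (· x) (Ring.inverse_mul_cancel _ (hunit 1 (by simp)))
    simpa [y, hb] using h
  exact hy_one ▸ hy_interior 1 hone

theorem mem_of_sub_map_mem [CompleteSpace E] (C : ProperCone ℝ E)
    (hC : (interior (C : Set E)).Nonempty) (T : E →L[ℝ] E) (hT : Set.MapsTo T C C)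
    (hunit : ∀ t ∈ Set.Icc (0 : ℝ) 1, IsUnit (1 - t • T)) {x : E} (hx : x - T x ∈ C) : x ∈ C := by
  obtain ⟨e, he⟩ := hC
  obtain ⟨z, hz⟩ : ∃ z, z - T z = e := by
    have h := congrArg (· e) (Ring.mul_inverse_cancel _ (hunit 1 (by simp)))
    exact ⟨Ring.inverse (1 - T) e, by simpa using h⟩
  have hperturb (ε : ℝ) (hε : 0 < ε) : x + ε • z ∈ C := by
    have hsplit : ε⁻¹ • x + z - T (ε⁻¹ • x + z) = e + ε⁻¹ • (x - T x) := by
      rw [← hz, map_add, map_smul, smul_sub]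
      abel
    have hscaled : ε⁻¹ • x + z ∈ C := by
      refine interior_subset (mem_interior_of_sub_map_mem_interior C T hT hunit ?_)
      exact hsplit ▸ add_mem_interior C he (C.smul_mem hx (inv_nonneg.2 hε.le))
    simpa [smul_add, smul_inv_smul₀ hε.ne'] using C.smul_mem hscaled hε.le
  have hlim : Tendsto (fun ε : ℝ => x + ε • z) (𝓝[>] 0) (𝓝 x) := by
    have : Continuous fun ε : ℝ => x + ε • z := by fun_prop
    simpa using (this.tendsto 0).mono_left nhdsWithin_le_nhds
  exact C.isClosed.mem_of_tendsto hlim (eventually_mem_nhdsWithin.mono hperturb)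

theorem mem_of_sub_map_mem_of_spectralRadius_lt_one [FiniteDimensional ℝ E] (C : ProperCone ℝ E)
    (hC : (interior (C : Set E)).Nonempty) (T : Module.End ℝ E) (hT : Set.MapsTo T C C)
    (hr : spectralRadius ℝ T < 1) {x : E} (hx : x - T x ∈ C) : x ∈ C := by
  have : CompleteSpace E := FiniteDimensional.complete ℝ E
  set T' : E →L[ℝ] E := Module.End.toContinuousLinearMap E T with hT'
  have hr' : spectralRadius ℝ T' < 1 := by
    rwa [spectralRadius, hT', AlgEquiv.spectrum_eq]
  refine mem_of_sub_map_mem C hC T' hT (fun t ht => ?_) hx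
  refine spectrum.isUnit_one_sub_smul_of_lt_inv_radius
    (lt_of_le_of_lt ?_ (ENNReal.one_lt_inv.2 hr'))
  exact_mod_cast (Real.norm_of_nonneg ht.1).trans_le ht.2

end ConePreserving

theorem spectrum_subset_of_isAdjointPair {K M N : Type*} [Field K] [AddCommGroup M] [Module K M]
    [AddCommGroup N] [Module K N] [FiniteDimensional K N] {b : M →ₗ[K] N →ₗ[K] K}
    (hb : b.SeparatingRight) {f : Module.End K M} {g : Module.End K N}
    (hfg : ∀ x y, b (f x) y = b x (g y)) : spectrum K g ⊆ spectrum K f := by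
  intro r
  contrapose!
  simp only [spectrum.notMem_iff]
  intro hf
  rw [LinearMap.isUnit_iff_ker_eq_bot, LinearMap.ker_eq_bot']
  intro y hy
  refine hb y fun x => ?_
  obtain ⟨z, rfl⟩ := ((Module.End.isUnit_iff _).1 hf).surjective x
  calc b ((algebraMap K (Module.End K M) r - f) z) y
      = b z ((algebraMap K (Module.End K N) r - g) y) := by
        simp [Module.algebraMap_end_apply, hfg]
    _ = 0 := by rw [hy, map_zero]

section AccretiveMatrices

variable {n : Type*} [Fintype n]

/-- The closed convex cone of accretive real matrices, those with `0 ≤ vᵀ X v` for every `v`.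
Unlike the positive semidefinite cone it is not confined to symmetric matrices, so it has nonempty
interior in the space of all matrices. -/
def accretiveCone (n : Type*) [Fintype n] : ProperCone ℝ (Matrix n n ℝ) where
  carrier := {X | ∀ v, 0 ≤ v ⬝ᵥ X *ᵥ v}
  add_mem' hX hY v := by
    rw [add_mulVec, dotProduct_add]
    exact add_nonneg (hX v) (hY v)
  zero_mem' v := by simp
  smul_mem' c X hX v := by
    rw [smul_mulVec, dotProduct_smul]
    exact smul_nonneg c.2 (hX v)
  isClosed' := by
    simp only [Set.ofPred_forall]
    exact isClosed_iInter fun v => isClosed_le continuous_const (by fun_prop)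

theorem mem_accretiveCone {X : Matrix n n ℝ} : X ∈ accretiveCone n ↔ ∀ v, 0 ≤ v ⬝ᵥ X *ᵥ v :=
  Iff.rfl

theorem posSemidef_iff_isHermitian_and_mem_accretiveCone {X : Matrix n n ℝ} :
    X.PosSemidef ↔ X.IsHermitian ∧ X ∈ accretiveCone n := by
  simp [posSemidef_iff_dotProduct_mulVec, mem_accretiveCone]

theorem mul_mul_transpose_mem_accretiveCone {k : Type*} [Fintype k] (M : Matrix k n ℝ)
    {X : Matrix n n ℝ} (hX : X ∈ accretiveCone n) : M * X * Mᵀ ∈ accretiveCone k := fun v => by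
  calc 0 ≤ (Mᵀ *ᵥ v) ⬝ᵥ X *ᵥ (Mᵀ *ᵥ v) := hX _
    _ = v ⬝ᵥ (M * X * Mᵀ) *ᵥ v := by
      rw [mulVec_transpose, ← dotProduct_mulVec, ← mulVec_transpose, mulVec_mulVec, mulVec_mulVec,
        Matrix.mul_assoc]

open scoped Matrix.Norms.L2Operator in
theorem one_mem_interior_accretiveCone [DecidableEq n] :
    1 ∈ interior (accretiveCone n : Set (Matrix n n ℝ)) := by
  refine mem_interior.2 ⟨Metric.ball 1 1, fun X hX v => ?_, Metric.isOpen_ball,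
    Metric.mem_ball_self one_pos⟩
  let u : EuclideanSpace ℝ n := WithLp.toLp 2 v
  let w : EuclideanSpace ℝ n := WithLp.toLp 2 ((1 - X) *ᵥ v)
  have hw : ‖w‖ ≤ ‖u‖ :=
    calc ‖w‖ ≤ ‖1 - X‖ * ‖u‖ := l2_opNorm_mulVec (1 - X) u
      _ ≤ ‖u‖ := mul_le_of_le_one_left (norm_nonneg u) (mem_ball_iff_norm'.1 hX).le
  have hinner : inner ℝ u w ≤ inner ℝ u u :=
    calc inner ℝ u w ≤ ‖u‖ * ‖w‖ := real_inner_le_norm u w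
      _ ≤ ‖u‖ * ‖u‖ := by gcongr
      _ = inner ℝ u u := (real_inner_self_eq_norm_mul_norm u).symm
  have hsplit : v ⬝ᵥ X *ᵥ v = inner ℝ u u - inner ℝ u w := by
    rw [EuclideanSpace.inner_toLp_toLp, EuclideanSpace.inner_toLp_toLp]
    simp [sub_mulVec, dotProduct_comm v]
  exact hsplit ▸ sub_nonneg.2 hinner

end AccretiveMatrices

/-- The trace pairing `⟨X, Y⟩ = tr (X Y)`, for which `calT` and `calTstar` are adjoint. -/
def traceForm (n 𝕜 : Type*) [Fintype n] [CommSemiring 𝕜] :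
    LinearMap.BilinForm 𝕜 (Matrix n n 𝕜) :=
  (LinearMap.mul 𝕜 (Matrix n n 𝕜)).compr₂ (traceLinearMap n 𝕜 𝕜)

theorem traceForm_apply {n 𝕜 : Type*} [Fintype n] [CommSemiring 𝕜] (X Y : Matrix n n 𝕜) :
    traceForm n 𝕜 X Y = (X * Y).trace := rfl

theorem separatingRight_traceForm (n 𝕜 : Type*) [Fintype n] [CommSemiring 𝕜] :
    (traceForm n 𝕜).SeparatingRight := fun _ hY =>
  ext_iff_trace_mul_left.2 fun X => by simpa [traceForm_apply] using hY X

theorem complete_square {k l 𝕜 : Type*} [Fintype k] [DecidableEq k] [CommRing 𝕜]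
    {S : Matrix k k 𝕜} (hS : S.IsSymm) (hdet : IsUnit S.det) (G L : Matrix k l 𝕜) :
    (L + S⁻¹ * G)ᵀ * S * (L + S⁻¹ * G) = Lᵀ * S * L + Lᵀ * G + Gᵀ * L + Gᵀ * S⁻¹ * G := by
  have hleft : (L + S⁻¹ * G)ᵀ * S = Lᵀ * S + Gᵀ := by
    rw [transpose_add, transpose_mul, transpose_nonsing_inv, hS.eq, Matrix.add_mul,
      nonsing_inv_mul_cancel_right _ _ hdet]
  rw [hleft, Matrix.add_mul, Matrix.mul_add, Matrix.mul_add, ← Matrix.mul_assoc (Lᵀ * S),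
    mul_nonsing_inv_cancel_right _ _ hdet, ← Matrix.mul_assoc Gᵀ]
  abel

section Riccati

variable {n m p q : ℕ}

theorem sandwich_apply (M X : Matrix (Fin n) (Fin n) ℝ) : sandwich M X = M * X * Mᵀ := by
  simp [sandwich, mul_assoc]

theorem traceForm_sandwich (M X Y : Matrix (Fin n) (Fin n) ℝ) :
    traceForm (Fin n) ℝ (sandwich M X) Y = traceForm (Fin n) ℝ X (sandwich Mᵀ Y) := by
  rw [traceForm_apply, traceForm_apply, sandwich_apply, sandwich_apply, transpose_transpose,
    mul_assoc, mul_assoc, trace_mul_comm]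
  simp only [mul_assoc]

variable (A : Matrix (Fin n) (Fin n) ℝ) (A' : Fin p → Matrix (Fin n) (Fin n) ℝ)
  (B : Matrix (Fin n) (Fin m) ℝ) (B' : Fin q → Matrix (Fin n) (Fin m) ℝ)
  (al : Fin p → ℝ) (be : Fin q → ℝ)

theorem traceForm_calT (L : Matrix (Fin m) (Fin n) ℝ) (X Y : Matrix (Fin n) (Fin n) ℝ) :
    traceForm (Fin n) ℝ (calT A A' B B' al be L X) Y =
      traceForm (Fin n) ℝ X (calTstar A A' B B' al be L Y) := by
  simp only [calT, calTstar, LinearMap.add_apply, LinearMap.sum_apply, LinearMap.smul_apply,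
    map_add, map_sum, map_smul, traceForm_sandwich]

theorem spectralRadius_calTstar_le (L : Matrix (Fin m) (Fin n) ℝ) :
    spectralRadius ℝ (calTstar A A' B B' al be L) ≤ spectralRadius ℝ (calT A A' B B' al be L) :=
  biSup_mono (spectrum_subset_of_isAdjointPair (separatingRight_traceForm (Fin n) ℝ)
    (traceForm_calT A A' B B' al be L))

variable {al be}

theorem mapsTo_calTstar_accretiveCone (hal : ∀ i, 0 ≤ al i) (hbe : ∀ j, 0 ≤ be j)
    (L : Matrix (Fin m) (Fin n) ℝ) :
    Set.MapsTo (calTstar A A' B B' al be L) (accretiveCone (Fin n)) (accretiveCone (Fin n)) := by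
  intro X hX
  have hsandwich (M : Matrix (Fin n) (Fin n) ℝ) : sandwich M X ∈ accretiveCone (Fin n) :=
    sandwich_apply M X ▸ mul_mul_transpose_mem_accretiveCone M hX
  simp only [calTstar, LinearMap.add_apply, LinearMap.sum_apply, LinearMap.smul_apply]
  exact add_mem
    (add_mem (hsandwich _)
      (sum_mem fun i _ => (accretiveCone _).smul_mem (hsandwich _) (hal i)))
    (sum_mem fun j _ => (accretiveCone _).smul_mem (hsandwich _) (hbe j))

variable {A A' B B'}

open scoped Matrix.Norms.L2Operator in
theorem Admissible.posSemidef_of_sub_calTstar {L : Matrix (Fin m) (Fin n) ℝ}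
    (hL : Admissible A A' B B' al be L) (hal : ∀ i, 0 ≤ al i) (hbe : ∀ j, 0 ≤ be j)
    {D : Matrix (Fin n) (Fin n) ℝ} (hD : D.IsHermitian)
    (h : (D - calTstar A A' B B' al be L D).PosSemidef) : D.PosSemidef := by
  rw [posSemidef_iff_isHermitian_and_mem_accretiveCone] at h ⊢
  exact ⟨hD, mem_of_sub_map_mem_of_spectralRadius_lt_one (accretiveCone (Fin n))
    ⟨1, one_mem_interior_accretiveCone⟩ _ (mapsTo_calTstar_accretiveCone A A' B B' hal hbe L)
    ((spectralRadius_calTstar_le A A' B B' al be L).trans_lt hL) h.2⟩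

variable (A A' B B' al be)

/-- The matrix `R + Bᵀ P B + Σⱼ β̄ⱼ Bⱼᵀ P Bⱼ` inverted in the SARE: the quadratic cost of the
input when the next state costs `P`. -/
noncomputable def inputCost (R : Matrix (Fin m) (Fin m) ℝ) (P : Matrix (Fin n) (Fin n) ℝ) :
    Matrix (Fin m) (Fin m) ℝ :=
  R + Bᵀ * P * B + ∑ j, be j • ((B' j)ᵀ * P * B' j)

/-- The gain `L(P)` associated with `P`. -/
noncomputable def riccatiGain (R : Matrix (Fin m) (Fin m) ℝ) (P : Matrix (Fin n) (Fin n) ℝ) :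
    Matrix (Fin m) (Fin n) ℝ :=
  -(inputCost B B' be R P)⁻¹ * (Bᵀ * P * A)

/-- The right-hand side of the SARE, whose solutions are the fixed points of this map. -/
noncomputable def riccatiMap (Q : Matrix (Fin n) (Fin n) ℝ) (R : Matrix (Fin m) (Fin m) ℝ)
    (P : Matrix (Fin n) (Fin n) ℝ) : Matrix (Fin n) (Fin n) ℝ :=
  Q + Aᵀ * P * A + (∑ i, al i • ((A' i)ᵀ * P * A' i)) -
    Aᵀ * P * B * (inputCost B B' be R P)⁻¹ * (Bᵀ * P * A)

variable {B B' be} in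
theorem posDef_inputCost (hbe : ∀ j, 0 ≤ be j) {R : Matrix (Fin m) (Fin m) ℝ} (hR : R.PosDef)
    {P : Matrix (Fin n) (Fin n) ℝ} (hP : P.PosSemidef) : (inputCost B B' be R P).PosDef :=
  (hR.add_posSemidef (hP.conjTranspose_mul_mul_same B)).add_posSemidef
    (posSemidef_sum _ fun j _ => (hP.conjTranspose_mul_mul_same (B' j)).smul (hbe j))

theorem calTstar_add_control_cost (R : Matrix (Fin m) (Fin m) ℝ) (L : Matrix (Fin m) (Fin n) ℝ)
    (P : Matrix (Fin n) (Fin n) ℝ) :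
    calTstar A A' B B' al be L P + Lᵀ * R * L =
      Aᵀ * P * A + (∑ i, al i • ((A' i)ᵀ * P * A' i)) +
        (Lᵀ * inputCost B B' be R P * L + Lᵀ * (Bᵀ * P * A) + Aᵀ * P * B * L) := by
  simp only [calTstar, inputCost, LinearMap.add_apply, LinearMap.sum_apply, LinearMap.smul_apply,
    sandwich_apply, transpose_transpose, transpose_add, transpose_mul, Matrix.add_mul,
    Matrix.mul_add, Matrix.mul_sum, Matrix.sum_mul, Matrix.mul_smul, Matrix.smul_mul,
    Matrix.mul_assoc]
  abel

theorem calTstar_add_running_cost_eq_riccatiMap_add_square (Q : Matrix (Fin n) (Fin n) ℝ)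
    {R : Matrix (Fin m) (Fin m) ℝ} {P : Matrix (Fin n) (Fin n) ℝ} (hP : P.IsHermitian)
    (hS : (inputCost B B' be R P).PosDef) (L : Matrix (Fin m) (Fin n) ℝ) :
    calTstar A A' B B' al be L P + Lᵀ * R * L + Q =
      riccatiMap A A' B B' al be Q R P + (L - riccatiGain A B B' be R P)ᵀ *
        inputCost B B' be R P * (L - riccatiGain A B B' be R P) := by
  have hdet : IsUnit (inputCost B B' be R P).det := hS.det_pos.ne'.isUnit
  have hSt : (inputCost B B' be R P).IsSymm := hS.isHermitian
  have hPt : Pᵀ = P := hP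
  have hcross : Aᵀ * P * B = (Bᵀ * P * A)ᵀ := by
    simp only [transpose_mul, transpose_transpose, hPt, Matrix.mul_assoc]
  rw [calTstar_add_control_cost, riccatiGain, Matrix.neg_mul, sub_neg_eq_add,
    complete_square hSt hdet, riccatiMap, hcross]
  abel

variable {A A' B B' al be} in
open scoped MatrixOrder in
theorem le_of_admissible_riccatiGain (hal : ∀ i, 0 ≤ al i) (hbe : ∀ j, 0 ≤ be j)
    {Q : Matrix (Fin n) (Fin n) ℝ} {R : Matrix (Fin m) (Fin m) ℝ}
    {P₁ P₂ : Matrix (Fin n) (Fin n) ℝ} (hP₁ : P₁.IsHermitian) (hP₂ : P₂.IsHermitian)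
    (hS₁ : (inputCost B B' be R P₁).PosDef) (hS₂ : (inputCost B B' be R P₂).PosDef)
    (hsub : P₁ ≤ riccatiMap A A' B B' al be Q R P₁)
    (hsuper : riccatiMap A A' B B' al be Q R P₂ ≤ P₂)
    (hadm : Admissible A A' B B' al be (riccatiGain A B B' be R P₂)) : P₁ ≤ P₂ := by
  set L := riccatiGain A B B' be R P₂ with hL
  set W := (L - riccatiGain A B B' be R P₁)ᵀ * inputCost B B' be R P₁ *
    (L - riccatiGain A B B' be R P₁)
  have hWpos : W.PosSemidef := hS₁.posSemidef.conjTranspose_mul_mul_same _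
  have h₁ := calTstar_add_running_cost_eq_riccatiMap_add_square A A' B B' al be Q hP₁ hS₁ L
  have h₂ : calTstar A A' B B' al be L P₂ + Lᵀ * R * L + Q = riccatiMap A A' B B' al be Q R P₂ := by
    simpa [hL] using calTstar_add_running_cost_eq_riccatiMap_add_square A A' B B' al be Q hP₂ hS₂ L
  have hdefect : P₂ - P₁ - calTstar A A' B B' al be L (P₂ - P₁) =
      (P₂ - riccatiMap A A' B B' al be Q R P₂) + (riccatiMap A A' B B' al be Q R P₁ - P₁) + W := by
    rw [← h₂, ← sub_eq_iff_eq_add.2 h₁, map_sub]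
    abel
  refine hadm.posSemidef_of_sub_calTstar hal hbe (hP₂.sub hP₁) ?_
  rw [hdefect]
  exact (PosSemidef.add hsuper hsub).add hWpos

open scoped MatrixOrder in
theorem stmt13_general (hal : ∀ i, 0 ≤ al i) (hbe : ∀ j, 0 ≤ be j)
    {Q : Matrix (Fin n) (Fin n) ℝ} {R : Matrix (Fin m) (Fin m) ℝ}
    {P₁ P₂ : Matrix (Fin n) (Fin n) ℝ} (hP₁ : P₁.IsHermitian) (hP₂ : P₂.IsHermitian)
    (hS₁ : (inputCost B B' be R P₁).PosDef) (hS₂ : (inputCost B B' be R P₂).PosDef)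
    (hSARE₁ : P₁ = riccatiMap A A' B B' al be Q R P₁)
    (hSARE₂ : P₂ = riccatiMap A A' B B' al be Q R P₂)
    (hadm₁ : Admissible A A' B B' al be (riccatiGain A B B' be R P₁))
    (hadm₂ : Admissible A A' B B' al be (riccatiGain A B B' be R P₂)) : P₁ = P₂ :=
  le_antisymm
    (le_of_admissible_riccatiGain hal hbe hP₁ hP₂ hS₁ hS₂ hSARE₁.le hSARE₂.ge hadm₂)
    (le_of_admissible_riccatiGain hal hbe hP₂ hP₁ hS₂ hS₁ hSARE₂.le hSARE₁.ge hadm₁)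

end Riccati

theorem stmt13 {n m p q : ℕ} (hn : 0 < n) (hm : 0 < m)
    (A : Matrix (Fin n) (Fin n) ℝ) (A' : Fin p → Matrix (Fin n) (Fin n) ℝ)
    (B : Matrix (Fin n) (Fin m) ℝ) (B' : Fin q → Matrix (Fin n) (Fin m) ℝ)
    (al : Fin p → ℝ) (be : Fin q → ℝ) (hal : ∀ i, 0 ≤ al i) (hbe : ∀ j, 0 ≤ be j)
    (Q : Matrix (Fin n) (Fin n) ℝ) (hQ : Q.PosSemidef)
    (R : Matrix (Fin m) (Fin m) ℝ) (hR : R.PosDef)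
    (P1 P2 : Matrix (Fin n) (Fin n) ℝ)
    (hP1 : P1.PosSemidef) (hP2 : P2.PosSemidef)
    (hSARE1 : P1 = Q + Aᵀ * P1 * A + (∑ i, al i • ((A' i)ᵀ * P1 * A' i)) -
      Aᵀ * P1 * B * (R + Bᵀ * P1 * B + ∑ j, be j • ((B' j)ᵀ * P1 * B' j))⁻¹ *
        (Bᵀ * P1 * A))
    (hSARE2 : P2 = Q + Aᵀ * P2 * A + (∑ i, al i • ((A' i)ᵀ * P2 * A' i)) -
      Aᵀ * P2 * B * (R + Bᵀ * P2 * B + ∑ j, be j • ((B' j)ᵀ * P2 * B' j))⁻¹ *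
        (Bᵀ * P2 * A))
    (hadm1 : Admissible A A' B B' al be
      (-(R + Bᵀ * P1 * B + ∑ j, be j • ((B' j)ᵀ * P1 * B' j))⁻¹ * (Bᵀ * P1 * A)))
    (hadm2 : Admissible A A' B B' al be
      (-(R + Bᵀ * P2 * B + ∑ j, be j • ((B' j)ᵀ * P2 * B' j))⁻¹ * (Bᵀ * P2 * A))) :
    P1 = P2 :=
  stmt13_general A A' B B' al be hal hbe hP1.isHermitian hP2.isHermitian
    (posDef_inputCost hbe hR hP1) (posDef_inputCost hbe hR hP2) hSARE1 hSARE2 hadm1 hadm2
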